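/- arXiv:2205.07521 — 2 statements merged into one kernel-verified Lean document; each statement's English description precedes it below -/
import Mathlib

section
/- (Proposition 2.1, adjoint state gradient formula) Assume each trajectory z_i(t;θ) is C¹ jointly in (t,θ). For each i = 1,…,r let U_i : [0,1] → ℝ^d solve the adjoint equation dU_i(t)/dt + (∇v(z_i(t;θ),t;θ))ᵀ U_i(t) = [2(∇v)ᵀ v − λ ∇(∇·v)](z_i(t;θ),t;θ) with terminal condition U_i(1) = λ ∇ρ₁(z_i(1;θ))/ρ₁(z_i(1;θ)). Then the objective F̄ is differentiable in θ and ∂F̄(θ)/∂θ = (1/r) Σ_{i=1}^r ∫₀¹ [ (2 v(z_i(t;θ),t;θ) − U_i(t))ᵀ v_θ(z_i(t;θ),t;θ) − λ ∂_θ(∇·v)(z_i(t;θ),t;θ) ] dt + (α/(s P₀)) Σ_{j=1}^s ∫₀¹ 2 ⟨∇v_θ(y_j,t;θ), ∇v(y_j,t;θ)⟩ dt. -/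
/-- `(∇v)_{ij}(x,t;θ) = ∂_{x_j} v_i (x,t;θ)`: entries of the spatial Jacobian of a
parametric velocity field. -/
noncomputable def spaceJac {d p : ℕ} (v : (Fin d → ℝ) → ℝ → (Fin p → ℝ) → Fin d → ℝ)
    (x : Fin d → ℝ) (t : ℝ) (θ : Fin p → ℝ) (i j : Fin d) : ℝ :=
  fderiv ℝ (fun y => v y t θ) x (Pi.single j 1) i

/-- Spatial divergence `(∇·v)(x,t;θ) = ∑ i, ∂_{x_i} v_i (x,t;θ)`. -/
noncomputable def pdiv {d p : ℕ} (v : (Fin d → ℝ) → ℝ → (Fin p → ℝ) → Fin d → ℝ)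
    (x : Fin d → ℝ) (t : ℝ) (θ : Fin p → ℝ) : ℝ :=
  ∑ i, spaceJac v x t θ i i

/-- `(v_θ)_{ik}(x,t;θ) = ∂_{θ_k} v_i (x,t;θ)`: entries of the Jacobian of `v` with
respect to the parameters. -/
noncomputable def paramJac {d p : ℕ} (v : (Fin d → ℝ) → ℝ → (Fin p → ℝ) → Fin d → ℝ)
    (x : Fin d → ℝ) (t : ℝ) (θ : Fin p → ℝ) (i : Fin d) (k : Fin p) : ℝ :=
  fderiv ℝ (fun ϑ => v x t ϑ) θ (Pi.single k 1) i

/-- `(∇(∇·v))_l (x,t;θ) = ∂_{x_l} (∇·v)(x,t;θ)`: spatial gradient of the divergence. -/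
noncomputable def gradDiv {d p : ℕ} (v : (Fin d → ℝ) → ℝ → (Fin p → ℝ) → Fin d → ℝ)
    (x : Fin d → ℝ) (t : ℝ) (θ : Fin p → ℝ) (l : Fin d) : ℝ :=
  fderiv ℝ (fun y => pdiv v y t θ) x (Pi.single l 1)

/-- `∂_{θ_k} (∇·v)(x,t;θ)`: parameter derivative of the divergence. -/
noncomputable def paramDiv {d p : ℕ} (v : (Fin d → ℝ) → ℝ → (Fin p → ℝ) → Fin d → ℝ)
    (x : Fin d → ℝ) (t : ℝ) (θ : Fin p → ℝ) (k : Fin p) : ℝ :=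
  fderiv ℝ (fun ϑ => pdiv v x t ϑ) θ (Pi.single k 1)

/-- `∂_{θ_k} (∇v)_{ij}(x,t;θ)`: entries of `∇v_θ`, the parameter derivative of the
spatial Jacobian. -/
noncomputable def paramSpaceJac {d p : ℕ} (v : (Fin d → ℝ) → ℝ → (Fin p → ℝ) → Fin d → ℝ)
    (x : Fin d → ℝ) (t : ℝ) (θ : Fin p → ℝ) (i j : Fin d) (k : Fin p) : ℝ :=
  fderiv ℝ (fun ϑ => spaceJac v x t ϑ i j) θ (Pi.single k 1)

/-! Along a trajectory the parameter gradient of a running cost `L` involves the sensitivity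
`∂_θ z`, which solves the linearized dynamics. The costate equation is its dual: it gives
`d/dt (P ∘ ∂_θ z) = D_θ[L(z)] - (∂_θ L - P ∘ ∂_θ f)`, so that integrating in time trades the
sensitivity for its boundary terms. These cancel the gradient of the terminal cost when
`P(b) = -Dg(z(b))`, and vanish at the initial time because `z` does not depend on `θ` there.
Expanding the logarithm of the transported density shows that each particle contributes such a
cost, with running cost `|v|² - λ ∇·v` and terminal cost `-λ log ρ₁`; its costate is
the functional `w ↦ U(t) · w`. -/

open MeasureTheory Topology

section ParametricIntegral

variable {Θ E : Type*} [NormedAddCommGroup Θ] [NormedSpace ℝ Θ]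
  [NormedAddCommGroup E] [NormedSpace ℝ E] {G : Θ → ℝ → E}

theorem hasFDerivAt_param (hG : ContDiff ℝ 1 fun q : Θ × ℝ => G q.1 q.2) (θ : Θ) (t : ℝ) :
    HasFDerivAt (fun ϑ => G ϑ t) (fderiv ℝ (fun ϑ => G ϑ t) θ) θ :=
  ((hG.comp (contDiff_prodMk_left t)).differentiable one_ne_zero θ).hasFDerivAt

theorem continuous_fderiv_param (hG : ContDiff ℝ 1 fun q : Θ × ℝ => G q.1 q.2) :
    Continuous fun q : Θ × ℝ => fderiv ℝ (fun ϑ => G ϑ q.2) q.1 :=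
  Continuous.fderiv_one (f := fun (q : Θ × ℝ) ϑ => G ϑ q.2)
    (hG.comp (contDiff_snd.prodMk (contDiff_snd.comp contDiff_fst))) continuous_fst

theorem hasFDerivAt_intervalIntegral_of_contDiff
    (hG : ContDiff ℝ 1 fun q : Θ × ℝ => G q.1 q.2) (θ : Θ) (a b : ℝ) :
    HasFDerivAt (fun ϑ => ∫ t in a..b, G ϑ t) (∫ t in a..b, fderiv ℝ (fun ϑ => G ϑ t) θ) θ := by
  have hG_cont (ϑ : Θ) : Continuous (G ϑ) := hG.continuous.comp (Continuous.prodMk_right ϑ)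
  have hG'_cont := continuous_fderiv_param hG
  have hG'_cont_time : Continuous fun t => fderiv ℝ (fun ϑ => G ϑ t) θ :=
    hG'_cont.comp (Continuous.prodMk_right θ)
  obtain ⟨C, hC⟩ := isCompact_uIcc.exists_bound_of_continuousOn
    (hG'_cont_time.continuousOn (s := Set.uIcc a b))
  have h_bound : ∀ᶠ ϑ in 𝓝 θ, ∀ t ∈ Set.uIcc a b, ‖fderiv ℝ (fun ϑ => G ϑ t) ϑ‖ < C + 1 :=
    isCompact_uIcc.eventually_forall_of_forall_eventually fun t ht =>
      hG'_cont.norm.continuousAt.eventually_lt_const ((hC t ht).trans_lt (lt_add_one C))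
  exact intervalIntegral.hasFDerivAt_integral_of_dominated_of_fderiv_le
    (F' := fun ϑ t => fderiv ℝ (fun ϑ => G ϑ t) ϑ) (bound := fun _ => C + 1) h_bound
    (.of_forall fun ϑ => (hG_cont ϑ).aestronglyMeasurable)
    ((hG_cont θ).intervalIntegrable a b)
    hG'_cont_time.aestronglyMeasurable
    (.of_forall fun t ht ϑ hϑ => (hϑ t (Set.uIoc_subset_uIcc ht)).le)
    intervalIntegrable_const
    (.of_forall fun t _ ϑ _ => hasFDerivAt_param hG ϑ t)

/-- Under the integral sign there are no mixed partials to commute: `z ϑ t` is its value at the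
base time `a` plus the integral of its velocity `G ϑ`. -/
theorem hasDerivAt_fderiv_param [CompleteSpace E] {z : Θ → ℝ → E} {θ : Θ} {a : ℝ}
    (hG : ContDiff ℝ 1 fun q : Θ × ℝ => G q.1 q.2)
    (hz : ∀ ϑ t, HasDerivAt (z ϑ) (G ϑ t) t)
    (hza : DifferentiableAt ℝ (fun ϑ => z ϑ a) θ) (t : ℝ) :
    HasDerivAt (fun τ => fderiv ℝ (fun ϑ => z ϑ τ) θ) (fderiv ℝ (fun ϑ => G ϑ t) θ) t := by
  have hG_cont (ϑ : Θ) : Continuous (G ϑ) := hG.continuous.comp (Continuous.prodMk_right ϑ)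
  have z_eq (ϑ : Θ) (τ : ℝ) : z ϑ τ = z ϑ a + ∫ s in a..τ, G ϑ s := by
    rw [intervalIntegral.integral_eq_sub_of_hasDerivAt (fun s _ => hz ϑ s)
      ((hG_cont ϑ).intervalIntegrable a τ), add_sub_cancel]
  have fderiv_z_eq (τ : ℝ) : fderiv ℝ (fun ϑ => z ϑ τ) θ =
      fderiv ℝ (fun ϑ => z ϑ a) θ + ∫ s in a..τ, fderiv ℝ (fun ϑ => G ϑ s) θ := by
    rw [funext fun ϑ => z_eq ϑ τ]
    exact (hza.hasFDerivAt.add (hasFDerivAt_intervalIntegral_of_contDiff hG θ a τ)).fderiv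
  have hG'_cont : Continuous fun s => fderiv ℝ (fun ϑ => G ϑ s) θ :=
    (continuous_fderiv_param hG).comp (Continuous.prodMk_right θ)
  rw [funext fderiv_z_eq]
  exact (hG'_cont.integral_hasStrictDerivAt a t).hasDerivAt.const_add _

end ParametricIntegral

section AdjointState

variable {Θ E F : Type*} [NormedAddCommGroup Θ] [NormedSpace ℝ Θ]
  [NormedAddCommGroup E] [NormedSpace ℝ E] [NormedAddCommGroup F] [NormedSpace ℝ F]

theorem hasFDerivAt_comp_graph {H : E → Θ → F} {ζ : Θ → E} {ζ' : Θ →L[ℝ] E} {θ : Θ}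
    (hH : DifferentiableAt ℝ (fun q : E × Θ => H q.1 q.2) (ζ θ, θ)) (hζ : HasFDerivAt ζ ζ' θ) :
    HasFDerivAt (fun ϑ => H (ζ ϑ) ϑ)
      (fderiv ℝ (fun x => H x θ) (ζ θ) ∘L ζ' + fderiv ℝ (fun ϑ => H (ζ θ) ϑ) θ) θ := by
  set D := fderiv ℝ (fun q : E × Θ => H q.1 q.2) (ζ θ, θ)
  have h_graph : HasFDerivAt (fun ϑ => H (ζ ϑ) ϑ) (D ∘L ζ'.prod (.id ℝ Θ)) θ :=
    hH.hasFDerivAt.comp (f := fun ϑ => (ζ ϑ, ϑ)) θ (hζ.prodMk (hasFDerivAt_id θ))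
  have h_left : HasFDerivAt (fun x => H x θ) (D ∘L .inl ℝ E Θ) (ζ θ) :=
    hH.hasFDerivAt.comp (f := fun x => (x, θ)) (ζ θ) (hasFDerivAt_prodMk_left (ζ θ) θ)
  have h_right : HasFDerivAt (fun ϑ => H (ζ θ) ϑ) (D ∘L .inr ℝ E Θ) θ :=
    hH.hasFDerivAt.comp (f := fun ϑ => (ζ θ, ϑ)) θ (hasFDerivAt_prodMk_right (ζ θ) θ)
  rw [h_left.fderiv, h_right.fderiv]
  convert h_graph using 1
  ext h
  simp [← map_add]

theorem contDiff_along_trajectory {n : WithTop ℕ∞} {H : E → ℝ → Θ → F} {z : Θ → ℝ → E}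
    (hH : ContDiff ℝ n fun q : E × ℝ × Θ => H q.1 q.2.1 q.2.2)
    (hz : ContDiff ℝ n fun q : Θ × ℝ => z q.1 q.2) :
    ContDiff ℝ n fun q : Θ × ℝ => H (z q.1 q.2) q.2 q.1 :=
  hH.comp (hz.prodMk (contDiff_snd.prodMk contDiff_fst))

theorem fderiv_along_trajectory {H : E → ℝ → Θ → F} {z : Θ → ℝ → E}
    (hH : ContDiff ℝ 1 fun q : E × ℝ × Θ => H q.1 q.2.1 q.2.2)
    (hz : ContDiff ℝ 1 fun q : Θ × ℝ => z q.1 q.2) (θ : Θ) (t : ℝ) :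
    fderiv ℝ (fun ϑ => H (z ϑ t) t ϑ) θ =
      fderiv ℝ (fun x => H x t θ) (z θ t) ∘L fderiv ℝ (fun ϑ => z ϑ t) θ
        + fderiv ℝ (fun ϑ => H (z θ t) t ϑ) θ :=
  (hasFDerivAt_comp_graph (H := fun x ϑ => H x t ϑ)
    ((hH.comp (contDiff_fst.prodMk (contDiff_const.prodMk contDiff_snd))).differentiable
      one_ne_zero _) (hasFDerivAt_param hz θ t)).fderiv

/-- The integrand `∂_θ L - P ∘ ∂_θ f` of the adjoint state gradient: the parameter derivative of
the Hamiltonian `L - P ∘ f` of the dynamics `f`, the running cost `L` and the costate `P`, taken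
along the trajectory `z θ`. Costates are functionals, so no inner product is involved. -/
noncomputable def adjointIntegrand (f : E → ℝ → Θ → E) (L : E → ℝ → Θ → F) (z : Θ → ℝ → E)
    (P : ℝ → E →L[ℝ] F) (θ : Θ) (t : ℝ) : Θ →L[ℝ] F :=
  fderiv ℝ (fun ϑ => L (z θ t) t ϑ) θ - P t ∘L fderiv ℝ (fun ϑ => f (z θ t) t ϑ) θ

variable {f : E → ℝ → Θ → E} {L : E → ℝ → Θ → F} {z : Θ → ℝ → E} {P : ℝ → E →L[ℝ] F}
  {θ : Θ} {a b : ℝ}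

theorem continuous_fderiv_param_along_curve
    (hL : ContDiff ℝ 1 fun q : E × ℝ × Θ => L q.1 q.2.1 q.2.2) {ζ : ℝ → E} (hζ : Continuous ζ)
    (θ : Θ) : Continuous fun t => fderiv ℝ (fun ϑ => L (ζ t) t ϑ) θ := by
  have hL' : Continuous fun q : E × ℝ => fderiv ℝ (fun ϑ => L q.1 q.2 ϑ) θ :=
    Continuous.fderiv_one (f := fun (q : E × ℝ) ϑ => L q.1 q.2 ϑ)
      (hL.comp ((contDiff_fst.comp contDiff_fst).prodMk
        ((contDiff_snd.comp contDiff_fst).prodMk contDiff_snd))) continuous_const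
  exact hL'.comp (hζ.prodMk continuous_id)

theorem intervalIntegrable_adjointIntegrand
    (hf : ContDiff ℝ 1 fun q : E × ℝ × Θ => f q.1 q.2.1 q.2.2)
    (hL : ContDiff ℝ 1 fun q : E × ℝ × Θ => L q.1 q.2.1 q.2.2)
    (hz : Continuous (z θ)) (hP : ContinuousOn P (Set.uIcc a b)) :
    IntervalIntegrable (adjointIntegrand f L z P θ) volume a b :=
  ((continuous_fderiv_param_along_curve hL hz θ).continuousOn.sub
    (hP.clm_comp (continuous_fderiv_param_along_curve hf hz θ).continuousOn)
    ).intervalIntegrable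

/-- The equation for the costate is the one that makes the terms containing the sensitivity
`∂_θ z` cancel here. -/
theorem hasDerivAt_costate_comp_sensitivity [CompleteSpace E]
    (hf : ContDiff ℝ 1 fun q : E × ℝ × Θ => f q.1 q.2.1 q.2.2)
    (hL : ContDiff ℝ 1 fun q : E × ℝ × Θ => L q.1 q.2.1 q.2.2)
    (hz : ContDiff ℝ 1 fun q : Θ × ℝ => z q.1 q.2)
    (hz_ode : ∀ ϑ t, HasDerivAt (z ϑ) (f (z ϑ t) t ϑ) t) {t : ℝ}
    (hP : HasDerivAt P (fderiv ℝ (fun x => L x t θ) (z θ t)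
      - P t ∘L fderiv ℝ (fun x => f x t θ) (z θ t)) t) :
    HasDerivAt (fun τ => P τ ∘L fderiv ℝ (fun ϑ => z ϑ τ) θ)
      (fderiv ℝ (fun ϑ => L (z ϑ t) t ϑ) θ - adjointIntegrand f L z P θ t) t := by
  have h_sensitivity : HasDerivAt (fun τ => fderiv ℝ (fun ϑ => z ϑ τ) θ)
      (fderiv ℝ (fun ϑ => f (z ϑ t) t ϑ) θ) t :=
    hasDerivAt_fderiv_param (contDiff_along_trajectory hf hz) hz_ode
      (hasFDerivAt_param hz θ t).differentiableAt t
  convert hP.clm_comp h_sensitivity using 1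
  rw [fderiv_along_trajectory hL hz, fderiv_along_trajectory hf hz, adjointIntegrand]
  ext h
  simp only [add_apply, sub_apply, ContinuousLinearMap.comp_apply, map_add]
  abel

theorem integral_adjointIntegrand [CompleteSpace E] [CompleteSpace F]
    (hf : ContDiff ℝ 1 fun q : E × ℝ × Θ => f q.1 q.2.1 q.2.2)
    (hL : ContDiff ℝ 1 fun q : E × ℝ × Θ => L q.1 q.2.1 q.2.2)
    (hz : ContDiff ℝ 1 fun q : Θ × ℝ => z q.1 q.2)
    (hz_init : fderiv ℝ (fun ϑ => z ϑ a) θ = 0)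
    (hz_ode : ∀ ϑ t, HasDerivAt (z ϑ) (f (z ϑ t) t ϑ) t)
    (hP : ∀ t ∈ Set.uIcc a b, HasDerivAt P (fderiv ℝ (fun x => L x t θ) (z θ t)
      - P t ∘L fderiv ℝ (fun x => f x t θ) (z θ t)) t) :
    ∫ t in a..b, adjointIntegrand f L z P θ t =
      (∫ t in a..b, fderiv ℝ (fun ϑ => L (z ϑ t) t ϑ) θ)
        - P b ∘L fderiv ℝ (fun ϑ => z ϑ b) θ := by
  have hL_int : IntervalIntegrable (fun t => fderiv ℝ (fun ϑ => L (z ϑ t) t ϑ) θ) volume a b :=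
    ((continuous_fderiv_param (G := fun ϑ t => L (z ϑ t) t ϑ)
      (contDiff_along_trajectory hL hz)).comp (Continuous.prodMk_right θ)).intervalIntegrable a b
  have h_adj_int : IntervalIntegrable (adjointIntegrand f L z P θ) volume a b :=
    intervalIntegrable_adjointIntegrand hf hL (hz.continuous.comp (Continuous.prodMk_right θ))
      (HasDerivAt.continuousOn hP)
  have h_ftc := intervalIntegral.integral_eq_sub_of_hasDerivAt
    (fun t ht => hasDerivAt_costate_comp_sensitivity hf hL hz hz_ode (hP t ht))
    (hL_int.sub h_adj_int)
  rw [intervalIntegral.integral_sub hL_int h_adj_int, hz_init, ContinuousLinearMap.comp_zero,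
    sub_zero] at h_ftc
  rw [← h_ftc, sub_sub_cancel]

theorem hasFDerivAt_bolza_of_adjoint_state [CompleteSpace E] [CompleteSpace F] {g : E → F}
    (hf : ContDiff ℝ 1 fun q : E × ℝ × Θ => f q.1 q.2.1 q.2.2)
    (hL : ContDiff ℝ 1 fun q : E × ℝ × Θ => L q.1 q.2.1 q.2.2)
    (hg : DifferentiableAt ℝ g (z θ b))
    (hz : ContDiff ℝ 1 fun q : Θ × ℝ => z q.1 q.2)
    (hz_init : fderiv ℝ (fun ϑ => z ϑ a) θ = 0)
    (hz_ode : ∀ ϑ t, HasDerivAt (z ϑ) (f (z ϑ t) t ϑ) t)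
    (hP : ∀ t ∈ Set.uIcc a b, HasDerivAt P (fderiv ℝ (fun x => L x t θ) (z θ t)
      - P t ∘L fderiv ℝ (fun x => f x t θ) (z θ t)) t)
    (hP_final : P b = -fderiv ℝ g (z θ b)) :
    HasFDerivAt (fun ϑ => (∫ t in a..b, L (z ϑ t) t ϑ) + g (z ϑ b))
      (∫ t in a..b, adjointIntegrand f L z P θ t) θ := by
  have h_running := hasFDerivAt_intervalIntegral_of_contDiff (G := fun ϑ t => L (z ϑ t) t ϑ)
    (contDiff_along_trajectory hL hz) θ a b
  have h_terminal := hg.hasFDerivAt.comp θ (hasFDerivAt_param hz θ b)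
  rw [integral_adjointIntegrand hf hL hz hz_init hz_ode hP, hP_final,
    ContinuousLinearMap.neg_comp, sub_neg_eq_add]
  exact h_running.add h_terminal

end AdjointState

theorem continuousLinearMap_ext_single {ι M : Type*} [Finite ι] [DecidableEq ι]
    [TopologicalSpace M] [AddCommGroup M] [Module ℝ M] {A B : (ι → ℝ) →L[ℝ] M}
    (h : ∀ i, A (Pi.single i 1) = B (Pi.single i 1)) : A = B :=
  ContinuousLinearMap.coe_injective ((Pi.basisFun ℝ ι).ext fun i => by simpa using h i)

theorem hasFDerivAt_sum_sq {ι W : Type*} [Fintype ι] [NormedAddCommGroup W] [NormedSpace ℝ W]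
    {u : ι → W → ℝ} {u' : ι → W →L[ℝ] ℝ} {w : W} (hu : ∀ i, HasFDerivAt (u i) (u' i) w) :
    HasFDerivAt (fun w => ∑ i, u i w ^ 2) (∑ i, (2 * u i w) • u' i) w :=
  HasFDerivAt.fun_sum fun i _ => by simpa using (hu i).pow 2

theorem fderiv_sum_sq_sub_const_mul {ι W : Type*} [Fintype ι] [NormedAddCommGroup W]
    [NormedSpace ℝ W] {u : W → ι → ℝ} {δ : W → ℝ} {w : W} (hu : DifferentiableAt ℝ u w)
    (hδ : DifferentiableAt ℝ δ w) (c : ℝ) (h : W) :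
    fderiv ℝ (fun w => ∑ i, u w i ^ 2 - c * δ w) w h =
      ∑ i, 2 * u w i * fderiv ℝ u w h i - c * fderiv ℝ δ w h := by
  rw [((hasFDerivAt_sum_sq (hasFDerivAt_pi'.1 hu.hasFDerivAt)).fun_sub
    (hδ.hasFDerivAt.const_mul c)).fderiv]
  simp

section VelocityField

variable {d p : ℕ} {v : (Fin d → ℝ) → ℝ → (Fin p → ℝ) → Fin d → ℝ}

theorem contDiff_spaceJac {n m : WithTop ℕ∞}
    (hv : ContDiff ℝ m fun q : (Fin d → ℝ) × ℝ × (Fin p → ℝ) => v q.1 q.2.1 q.2.2)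
    (hnm : n + 1 ≤ m) (i j : Fin d) :
    ContDiff ℝ n fun q : (Fin d → ℝ) × ℝ × (Fin p → ℝ) => spaceJac v q.1 q.2.1 q.2.2 i j := by
  have hv_slices : ContDiff ℝ m fun q : ((Fin d → ℝ) × ℝ × (Fin p → ℝ)) × (Fin d → ℝ) =>
      v q.2 q.1.2.1 q.1.2.2 :=
    hv.comp (contDiff_snd.prodMk (contDiff_snd.comp contDiff_fst))
  exact contDiff_pi.1 (ContDiff.fderiv_apply
    (f := fun (q : (Fin d → ℝ) × ℝ × (Fin p → ℝ)) y => v y q.2.1 q.2.2)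
    hv_slices contDiff_fst contDiff_const hnm) i

theorem contDiff_pdiv {n m : WithTop ℕ∞}
    (hv : ContDiff ℝ m fun q : (Fin d → ℝ) × ℝ × (Fin p → ℝ) => v q.1 q.2.1 q.2.2)
    (hnm : n + 1 ≤ m) :
    ContDiff ℝ n fun q : (Fin d → ℝ) × ℝ × (Fin p → ℝ) => pdiv v q.1 q.2.1 q.2.2 :=
  ContDiff.sum fun i _ => contDiff_spaceJac hv hnm i i

/-- The regularizer `∫₀¹ |∇v(y,t;ϑ)|_F² dt` of the objective at a sample point `y`. -/
noncomputable def jacobianPenalty (v : (Fin d → ℝ) → ℝ → (Fin p → ℝ) → Fin d → ℝ)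
    (y : Fin d → ℝ) (ϑ : Fin p → ℝ) : ℝ :=
  ∫ t in (0:ℝ)..1, ∑ l, ∑ m, spaceJac v y t ϑ l m ^ 2

theorem hasFDerivAt_jacobianPenalty
    (hv : ContDiff ℝ 2 fun q : (Fin d → ℝ) × ℝ × (Fin p → ℝ) => v q.1 q.2.1 q.2.2)
    (y : Fin d → ℝ) (θ : Fin p → ℝ) :
    HasFDerivAt (jacobianPenalty v y) (∫ t in (0:ℝ)..1, ∑ l, ∑ m,
      (2 * spaceJac v y t θ l m) • fderiv ℝ (fun ϑ => spaceJac v y t ϑ l m) θ) θ := by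
  have hJ (l m : Fin d) : ContDiff ℝ 1 fun q : (Fin p → ℝ) × ℝ => spaceJac v y q.2 q.1 l m :=
    contDiff_along_trajectory (H := fun x t ϑ => spaceJac v x t ϑ l m) (z := fun _ _ => y)
      (contDiff_spaceJac hv le_rfl l m) contDiff_const
  have h_integral := hasFDerivAt_intervalIntegral_of_contDiff
    (G := fun ϑ t => ∑ l, ∑ m, spaceJac v y t ϑ l m ^ 2)
    (.sum fun l _ => .sum fun m _ => (hJ l m).pow 2) θ 0 1
  have h_integrand (t : ℝ) : HasFDerivAt (fun ϑ => ∑ l, ∑ m, spaceJac v y t ϑ l m ^ 2)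
      (∑ l, ∑ m, (2 * spaceJac v y t θ l m) • fderiv ℝ (fun ϑ => spaceJac v y t ϑ l m) θ) θ :=
    .fun_sum fun l _ => hasFDerivAt_sum_sq fun m =>
      hasFDerivAt_param (G := fun ϑ t => spaceJac v y t ϑ l m) (hJ l m) θ t
  simp only [(h_integrand _).fderiv] at h_integral
  exact h_integral

theorem fderiv_jacobianPenalty_single
    (hv : ContDiff ℝ 2 fun q : (Fin d → ℝ) × ℝ × (Fin p → ℝ) => v q.1 q.2.1 q.2.2)
    (y : Fin d → ℝ) (θ : Fin p → ℝ) (k : Fin p) :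
    fderiv ℝ (jacobianPenalty v y) θ (Pi.single k 1) = ∫ t in (0:ℝ)..1,
      2 * ∑ l, ∑ m, paramSpaceJac v y t θ l m k * spaceJac v y t θ l m := by
  have hJ (l m : Fin d) := contDiff_spaceJac (n := 1) hv le_rfl l m
  have h_cont : Continuous fun t => ∑ l, ∑ m,
      (2 * spaceJac v y t θ l m) • fderiv ℝ (fun ϑ => spaceJac v y t ϑ l m) θ :=
    continuous_finsetSum _ fun l _ => continuous_finsetSum _ fun m _ =>
      (continuous_const.mul ((hJ l m).continuous.comp (f := fun t => (y, t, θ)) (by fun_prop))).smul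
        (continuous_fderiv_param_along_curve (L := fun x t ϑ => spaceJac v x t ϑ l m) (hJ l m)
          continuous_const θ)
  rw [(hasFDerivAt_jacobianPenalty hv y θ).fderiv,
    ContinuousLinearMap.intervalIntegral_apply (h_cont.intervalIntegrable 0 1)]
  simp [paramSpaceJac, Finset.mul_sum, mul_assoc, mul_comm, mul_left_comm]

/-- The integrand `|v|² - λ ∇·v` of the cost of one particle: expanding the logarithm of the
transported density turns its divergence integral into a running cost. -/
noncomputable def runningCost (v : (Fin d → ℝ) → ℝ → (Fin p → ℝ) → Fin d → ℝ) (lam : ℝ)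
    (x : Fin d → ℝ) (t : ℝ) (ϑ : Fin p → ℝ) : ℝ :=
  ∑ l, v x t ϑ l ^ 2 - lam * pdiv v x t ϑ

theorem contDiff_runningCost
    (hv : ContDiff ℝ 2 fun q : (Fin d → ℝ) × ℝ × (Fin p → ℝ) => v q.1 q.2.1 q.2.2) (lam : ℝ) :
    ContDiff ℝ 1 fun q : (Fin d → ℝ) × ℝ × (Fin p → ℝ) => runningCost v lam q.1 q.2.1 q.2.2 :=
  (ContDiff.sum fun l _ => (contDiff_pi.1 (hv.of_le one_le_two) l).pow 2).sub
    (contDiff_const.mul (contDiff_pdiv hv le_rfl))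

theorem fderiv_runningCost_space_single
    (hv : ContDiff ℝ 2 fun q : (Fin d → ℝ) × ℝ × (Fin p → ℝ) => v q.1 q.2.1 q.2.2) (lam : ℝ)
    (x : Fin d → ℝ) (t : ℝ) (θ : Fin p → ℝ) (l : Fin d) :
    fderiv ℝ (fun x => runningCost v lam x t θ) x (Pi.single l 1) =
      2 * ∑ m, spaceJac v x t θ m l * v x t θ m - lam * gradDiv v x t θ l := by
  have h_slice : DifferentiableAt ℝ (fun x : Fin d → ℝ => (x, t, θ)) x := by fun_prop
  have hv_diff : DifferentiableAt ℝ (fun x => v x t θ) x :=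
    (hv.differentiable two_ne_zero _).comp x h_slice
  have hdiv_diff : DifferentiableAt ℝ (fun x => pdiv v x t θ) x :=
    ((contDiff_pdiv hv le_rfl).differentiable one_ne_zero _).comp x h_slice
  unfold runningCost
  rw [fderiv_sum_sq_sub_const_mul hv_diff hdiv_diff]
  simp [spaceJac, gradDiv, Finset.mul_sum, mul_assoc, mul_comm, mul_left_comm]

theorem fderiv_runningCost_param_single
    (hv : ContDiff ℝ 2 fun q : (Fin d → ℝ) × ℝ × (Fin p → ℝ) => v q.1 q.2.1 q.2.2) (lam : ℝ)
    (x : Fin d → ℝ) (t : ℝ) (θ : Fin p → ℝ) (k : Fin p) :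
    fderiv ℝ (fun ϑ => runningCost v lam x t ϑ) θ (Pi.single k 1) =
      ∑ l, 2 * v x t θ l * paramJac v x t θ l k - lam * paramDiv v x t θ k := by
  have h_slice : DifferentiableAt ℝ (fun ϑ : Fin p → ℝ => (x, t, ϑ)) θ := by fun_prop
  have hv_diff : DifferentiableAt ℝ (fun ϑ => v x t ϑ) θ :=
    (hv.differentiable two_ne_zero _).comp θ h_slice
  have hdiv_diff : DifferentiableAt ℝ (fun ϑ => pdiv v x t ϑ) θ :=
    ((contDiff_pdiv hv le_rfl).differentiable one_ne_zero _).comp θ h_slice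
  unfold runningCost
  rw [fderiv_sum_sq_sub_const_mul hv_diff hdiv_diff]
  simp [paramJac, paramDiv]

/-- The contribution of one particle to the objective, with trajectories `z ϑ` and initial density
`c` at its starting point: kinetic energy plus `λ` times the logarithm of the ratio of the
transported density to the target density `ρ` at time `1`. -/
noncomputable def particleCost (v : (Fin d → ℝ) → ℝ → (Fin p → ℝ) → Fin d → ℝ) (c lam : ℝ)
    (ρ : (Fin d → ℝ) → ℝ) (z : (Fin p → ℝ) → ℝ → Fin d → ℝ) (ϑ : Fin p → ℝ) : ℝ :=
  (∫ t in (0:ℝ)..1, ∑ l, v (z ϑ t) t ϑ l ^ 2) +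
    lam * Real.log (c * Real.exp (-∫ t in (0:ℝ)..1, pdiv v (z ϑ t) t ϑ) / ρ (z ϑ 1))

variable {c lam : ℝ} {ρ : (Fin d → ℝ) → ℝ} {z : (Fin p → ℝ) → ℝ → Fin d → ℝ}
  {θ : Fin p → ℝ} {U : ℝ → Fin d → ℝ}

theorem particleCost_eq_bolza
    (hv : ContDiff ℝ 2 fun q : (Fin d → ℝ) × ℝ × (Fin p → ℝ) => v q.1 q.2.1 q.2.2)
    (hc : c ≠ 0) {ϑ : Fin p → ℝ} (hρ : ρ (z ϑ 1) ≠ 0) (hz : Continuous (z ϑ)) :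
    particleCost v c lam ρ z ϑ = lam * Real.log c +
      ((∫ t in (0:ℝ)..1, runningCost v lam (z ϑ t) t ϑ) + -(lam * Real.log (ρ (z ϑ 1)))) := by
  have h_curve : Continuous fun t => (z ϑ t, t, ϑ) := by fun_prop
  have hv_cont : Continuous fun t => v (z ϑ t) t ϑ := hv.continuous.comp h_curve
  have hdiv_cont : Continuous fun t => pdiv v (z ϑ t) t ϑ :=
    (contDiff_pdiv (n := 1) hv le_rfl).continuous.comp h_curve
  have hsq_cont : Continuous fun t => ∑ l, v (z ϑ t) t ϑ l ^ 2 :=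
    continuous_finsetSum _ fun l _ => ((continuous_apply l).comp hv_cont).pow 2
  simp only [particleCost, runningCost]
  rw [intervalIntegral.integral_sub (hsq_cont.intervalIntegrable 0 1)
      ((hdiv_cont.intervalIntegrable 0 1).const_mul lam),
    intervalIntegral.integral_const_mul, Real.log_div (by positivity) hρ,
    Real.log_mul hc (Real.exp_ne_zero _), Real.log_exp]
  ring

/-- A vector `u` as the functional `w ↦ u · w`, which turns an adjoint state into a costate. -/
noncomputable def dotCLM (d : ℕ) : (Fin d → ℝ) →L[ℝ] (Fin d → ℝ) →L[ℝ] ℝ :=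
  (dotProductBilin ℝ ℝ).toContinuousBilinearMap

theorem dotCLM_apply (u w : Fin d → ℝ) : dotCLM d u w = u ⬝ᵥ w := rfl

theorem hasDerivAt_dotCLM_adjointState
    (hv : ContDiff ℝ 2 fun q : (Fin d → ℝ) × ℝ × (Fin p → ℝ) => v q.1 q.2.1 q.2.2)
    {x : Fin d → ℝ} {t : ℝ}
    (hU : ∀ l, HasDerivAt (fun τ => U τ l)
      (-(∑ m, spaceJac v x t θ m l * U t m) + 2 * (∑ m, spaceJac v x t θ m l * v x t θ m)
        - lam * gradDiv v x t θ l) t) :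
    HasDerivAt (fun τ => dotCLM d (U τ))
      (fderiv ℝ (fun x => runningCost v lam x t θ) x
        - dotCLM d (U t) ∘L fderiv ℝ (fun x => v x t θ) x) t := by
  have h_transport (l : Fin d) :
      dotCLM d (U t) (fderiv ℝ (fun x => v x t θ) x (Pi.single l 1)) =
        ∑ m, spaceJac v x t θ m l * U t m := by
    simp only [dotCLM_apply, dotProduct, spaceJac, mul_comm]
  refine ((dotCLM d).hasFDerivAt.comp_hasDerivAt t (hasDerivAt_pi.2 hU)).congr_deriv
    (continuousLinearMap_ext_single fun l => ?_)
  rw [sub_apply, ContinuousLinearMap.comp_apply, h_transport, fderiv_runningCost_space_single hv]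
  simp only [dotCLM_apply, dotProduct_single, mul_one]
  ring

theorem dotCLM_eq_neg_fderiv_neg_log {x u : Fin d → ℝ} (hρ : DifferentiableAt ℝ ρ x)
    (hρx : ρ x ≠ 0) (hu : ∀ l, u l = lam * fderiv ℝ ρ x (Pi.single l 1) / ρ x) :
    dotCLM d u = -fderiv ℝ (fun x => -(lam * Real.log (ρ x))) x := by
  rw [((hρ.hasFDerivAt.log hρx).const_mul lam).fun_neg.fderiv]
  refine continuousLinearMap_ext_single fun l => ?_
  simp only [dotCLM_apply, dotProduct_single, hu, mul_one, neg_neg, smul_apply, smul_eq_mul]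
  ring

theorem adjointIntegrand_runningCost_single
    (hv : ContDiff ℝ 2 fun q : (Fin d → ℝ) × ℝ × (Fin p → ℝ) => v q.1 q.2.1 q.2.2)
    (t : ℝ) (k : Fin p) :
    adjointIntegrand v (runningCost v lam) z (fun τ => dotCLM d (U τ)) θ t (Pi.single k 1) =
      (∑ l, (2 * v (z θ t) t θ l - U t l) * paramJac v (z θ t) t θ l k)
        - lam * paramDiv v (z θ t) t θ k := by
  rw [adjointIntegrand, sub_apply, fderiv_runningCost_param_single hv]
  simp only [ContinuousLinearMap.comp_apply, dotCLM_apply, dotProduct, paramJac, sub_mul,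
    Finset.sum_sub_distrib]
  ring

theorem hasFDerivAt_particleCost
    (hv : ContDiff ℝ 2 fun q : (Fin d → ℝ) × ℝ × (Fin p → ℝ) => v q.1 q.2.1 q.2.2)
    (hρ : DifferentiableAt ℝ ρ (z θ 1)) (hρ_ne : ∀ x, ρ x ≠ 0) (hc : c ≠ 0)
    (hz : ContDiff ℝ 1 fun q : (Fin p → ℝ) × ℝ => z q.1 q.2)
    (hz_init : fderiv ℝ (fun ϑ => z ϑ 0) θ = 0)
    (hz_ode : ∀ ϑ t, HasDerivAt (z ϑ) (v (z ϑ t) t ϑ) t)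
    (hU : ∀ t ∈ Set.Icc (0:ℝ) 1, ∀ l, HasDerivAt (fun τ => U τ l)
      (-(∑ m, spaceJac v (z θ t) t θ m l * U t m)
        + 2 * (∑ m, spaceJac v (z θ t) t θ m l * v (z θ t) t θ m)
        - lam * gradDiv v (z θ t) t θ l) t)
    (hU_final : ∀ l, U 1 l = lam * fderiv ℝ ρ (z θ 1) (Pi.single l 1) / ρ (z θ 1)) :
    HasFDerivAt (particleCost v c lam ρ z)
      (∫ t in (0:ℝ)..1, adjointIntegrand v (runningCost v lam) z (fun τ => dotCLM d (U τ)) θ t)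
      θ := by
  have hz_cont (ϑ : Fin p → ℝ) : Continuous (z ϑ) :=
    hz.continuous.comp (Continuous.prodMk_right ϑ)
  refine HasFDerivAt.congr_of_eventuallyEq ?_
    (.of_forall fun ϑ => particleCost_eq_bolza hv hc (hρ_ne _) (hz_cont ϑ))
  refine (hasFDerivAt_bolza_of_adjoint_state (hv.of_le one_le_two) (contDiff_runningCost hv lam)
    ((hρ.log (hρ_ne _)).const_mul lam).fun_neg hz hz_init hz_ode ?_
    (dotCLM_eq_neg_fderiv_neg_log hρ (hρ_ne _) hU_final)).const_add _
  rw [Set.uIcc_of_le zero_le_one]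
  exact fun t ht => hasDerivAt_dotCLM_adjointState hv (hU t ht)

theorem integral_adjointIntegrand_runningCost_single
    (hv : ContDiff ℝ 2 fun q : (Fin d → ℝ) × ℝ × (Fin p → ℝ) => v q.1 q.2.1 q.2.2)
    (hz : Continuous (z θ)) (hU : ContinuousOn U (Set.Icc 0 1)) (k : Fin p) :
    (∫ t in (0:ℝ)..1, adjointIntegrand v (runningCost v lam) z (fun τ => dotCLM d (U τ)) θ t)
        (Pi.single k 1) =
      ∫ t in (0:ℝ)..1, (∑ l, (2 * v (z θ t) t θ l - U t l) * paramJac v (z θ t) t θ l k)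
        - lam * paramDiv v (z θ t) t θ k := by
  rw [← Set.uIcc_of_le zero_le_one] at hU
  have hP : ContinuousOn (fun t => dotCLM d (U t)) (Set.uIcc 0 1) :=
    (dotCLM d).continuous.comp_continuousOn hU
  rw [ContinuousLinearMap.intervalIntegral_apply (intervalIntegrable_adjointIntegrand
    (hv.of_le one_le_two) (contDiff_runningCost hv lam) hz hP)]
  simp only [adjointIntegrand_runningCost_single hv]

end VelocityField

/- STATEMENT 0 (Proposition 2.1): adjoint state gradient formula for the
semi-discrete dynamic-OT objective
`F̄(θ) = (1/r) ∑ᵢ ∫₀¹ |v(zᵢ(t;θ),t;θ)|² dt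
        + (α/(s P₀)) ∑ⱼ ∫₀¹ |∇v(yⱼ,t;θ)|_F² dt
        + (λ/r) ∑ᵢ log( ρ(zᵢ(1;θ),1) / ρ₁(zᵢ(1;θ)) )`,
where `ρ(zᵢ(1;θ),1) = ρ₀(xᵢ) exp(-∫₀¹ (∇·v)(zᵢ(t;θ),t;θ) dt)` is the transported
density. If each `Uᵢ` solves the adjoint equation
`dUᵢ/dt + (∇v)ᵀ Uᵢ = 2 (∇v)ᵀ v − λ ∇(∇·v)` along `zᵢ` with terminal condition
`Uᵢ(1) = λ ∇ρ₁(zᵢ(1))/ρ₁(zᵢ(1))`, then `F̄` is differentiable at `θ` and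
`∂F̄/∂θ = (1/r) ∑ᵢ ∫₀¹ [(2v − Uᵢ)ᵀ v_θ − λ ∂_θ(∇·v)] dt
         + (α/(s P₀)) ∑ⱼ ∫₀¹ 2 ⟨∇v_θ, ∇v⟩ dt` (stated componentwise). -/
theorem adjoint_state_gradient_formula {d p r s : ℕ}
    (hr : 0 < r) (hs : 0 < s)
    (v : (Fin d → ℝ) → ℝ → (Fin p → ℝ) → Fin d → ℝ)
    (hv : ContDiff ℝ 2 fun q : (Fin d → ℝ) × ℝ × (Fin p → ℝ) => v q.1 q.2.1 q.2.2)
    (ρ₀ ρ₁ : (Fin d → ℝ) → ℝ)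
    (hρ₀_pos : ∀ x, 0 < ρ₀ x) (hρ₁_pos : ∀ x, 0 < ρ₁ x) (hρ₁ : ContDiff ℝ 1 ρ₁)
    (x : Fin r → Fin d → ℝ) (y : Fin s → Fin d → ℝ)
    (lam α P₀ : ℝ) (hlam : 0 < lam) (hα : 0 < α) (hP₀ : 0 < P₀)
    -- the characteristics `z i θ t`, C¹ jointly in (t, θ)
    (z : Fin r → (Fin p → ℝ) → ℝ → Fin d → ℝ)
    (hzC1 : ∀ i, ContDiff ℝ 1 fun q : (Fin p → ℝ) × ℝ => z i q.1 q.2)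
    (hz0 : ∀ i ϑ, z i ϑ 0 = x i)
    (hzode : ∀ (i : Fin r) (ϑ : Fin p → ℝ) (t : ℝ),
        HasDerivAt (fun τ => z i ϑ τ) (v (z i ϑ t) t ϑ) t)
    (θ : Fin p → ℝ)
    -- the adjoint states `U i`, solving the adjoint ODE with its terminal condition
    (U : Fin r → ℝ → Fin d → ℝ)
    (hUode : ∀ i : Fin r, ∀ t ∈ Set.Icc (0:ℝ) 1, ∀ l : Fin d,
        HasDerivAt (fun τ => U i τ l)
          (-(∑ m, spaceJac v (z i θ t) t θ m l * U i t m)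
            + 2 * (∑ m, spaceJac v (z i θ t) t θ m l * v (z i θ t) t θ m)
            - lam * gradDiv v (z i θ t) t θ l) t)
    (hU1 : ∀ (i : Fin r) (l : Fin d),
        U i 1 l = lam * fderiv ℝ ρ₁ (z i θ 1) (Pi.single l 1) / ρ₁ (z i θ 1))
    -- the semi-discrete objective
    (F : (Fin p → ℝ) → ℝ)
    (hF : F = fun ϑ =>
        (1 / (r : ℝ)) * (∑ i, ∫ t in (0:ℝ)..1, ∑ l, (v (z i ϑ t) t ϑ l) ^ 2)
          + (α / ((s : ℝ) * P₀)) *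
              (∑ j, ∫ t in (0:ℝ)..1, ∑ l, ∑ m, (spaceJac v (y j) t ϑ l m) ^ 2)
          + (lam / (r : ℝ)) *
              (∑ i, Real.log
                ((ρ₀ (x i) * Real.exp (-(∫ t in (0:ℝ)..1, pdiv v (z i ϑ t) t ϑ)))
                  / ρ₁ (z i ϑ 1)))) :
    DifferentiableAt ℝ F θ ∧
    ∀ k : Fin p,
      fderiv ℝ F θ (Pi.single k 1)
        = (1 / (r : ℝ)) * (∑ i, ∫ t in (0:ℝ)..1,
              (∑ l, (2 * v (z i θ t) t θ l - U i t l) * paramJac v (z i θ t) t θ l k)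
                - lam * paramDiv v (z i θ t) t θ k)
          + (α / ((s : ℝ) * P₀)) * (∑ j, ∫ t in (0:ℝ)..1,
              2 * ∑ l, ∑ m,
                paramSpaceJac v (y j) t θ l m k * spaceJac v (y j) t θ l m) := by
  have hF_cost : F = fun ϑ => 1 / (r : ℝ) * ∑ i, particleCost v (ρ₀ (x i)) lam ρ₁ (z i) ϑ
      + α / (s * P₀) * ∑ j, jacobianPenalty v (y j) ϑ := by
    funext ϑ
    simp only [hF, particleCost, jacobianPenalty, Finset.sum_add_distrib, ← Finset.mul_sum]
    ring
  have h_cost (i : Fin r) := hasFDerivAt_particleCost hv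
    (hρ₁.differentiable one_ne_zero (z i θ 1)) (fun x => (hρ₁_pos x).ne') (hρ₀_pos (x i)).ne'
    (hzC1 i) (by simp [hz0]) (hzode i) (hUode i) (hU1 i)
  have h_penalty (j : Fin s) :=
    (hasFDerivAt_jacobianPenalty hv (y j) θ).differentiableAt.hasFDerivAt
  have h_deriv :=
    ((HasFDerivAt.fun_sum (u := Finset.univ) fun i _ => h_cost i).const_mul (1 / (r : ℝ))).fun_add
      ((HasFDerivAt.fun_sum (u := Finset.univ) fun j _ => h_penalty j).const_mul (α / (s * P₀)))
  rw [← hF_cost] at h_deriv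
  refine ⟨h_deriv.differentiableAt, fun k => ?_⟩
  have hz_cont (i : Fin r) : Continuous (z i θ) :=
    (hzC1 i).continuous.comp (Continuous.prodMk_right θ)
  have hU_cont (i : Fin r) : ContinuousOn (U i) (Set.Icc 0 1) :=
    HasDerivAt.continuousOn fun t ht => hasDerivAt_pi.2 (hUode i t ht)
  rw [h_deriv.fderiv]
  simp only [add_apply, smul_apply, sum_apply, smul_eq_mul,
    integral_adjointIntegrand_runningCost_single hv (hz_cont _) (hU_cont _),
    fderiv_jacobianPenalty_single hv]
end

section
/- (The pushforward along the flow solves the continuity equation weakly) Let v : ℝ^d × [0,1] → ℝ^d be continuous and let z : ℝ^d × [0,1] → ℝ^d be continuous, differentiable in t, and satisfy ∂_t z(x,t) = v(z(x,t),t) with z(x,0) = x. Let μ₀ be a finite Borel measure on ℝ^d and set μ_t := (z(·,t))_# μ₀, the pushforward of μ₀ under x ↦ z(x,t). Then for every compactly supported C¹ function φ : ℝ^d → ℝ, the map t ↦ ∫ φ dμ_t is differentiable on [0,1] with (d/dt) ∫_{ℝ^d} φ dμ_t = ∫_{ℝ^d} ⟨∇φ(y), v(y,t)⟩ dμ_t(y);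 that is, μ_t is a weak solution of ∂_t ρ + ∇·(ρ v) = 0 with initial datum μ₀. -/
open MeasureTheory

/-!
Along a characteristic, the chain rule gives `∂ₜ φ(z(x,t)) = Dφ(z(x,t)) v(z(x,t),t)`. The function
`(t, y) ↦ Dφ(y) v(y,t)` is jointly continuous and vanishes for `y` outside the compact support of
`φ`, so for times near `t` it is bounded uniformly in `y`, however far the characteristics travel.
As the measure is finite, this constant dominates the time derivatives, and one may differentiate
under the integral sign.
-/

open Function
open scoped Topology

section CompactSupport

theorem exists_eventually_forall_norm_le_of_eq_zero_off_isCompact {T Y F : Type*}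
    [TopologicalSpace T] [TopologicalSpace Y] [SeminormedAddCommGroup F]
    {g : T → Y → F} (hg : Continuous (uncurry g)) {K : Set Y} (hK : IsCompact K)
    (hgK : ∀ t, ∀ y ∉ K, g t y = 0) (t : T) :
    ∃ C, ∀ᶠ s in 𝓝 t, ∀ y, ‖g s y‖ ≤ C := by
  obtain ⟨C, hC⟩ : ∃ C, ∀ y ∈ K, ‖g t y‖ ≤ C :=
    hK.exists_bound_of_continuousOn (hg.uncurry_left t).continuousOn
  have bound_on_K : ∀ᶠ s in 𝓝 t, ∀ y ∈ K, ‖g s y‖ < max C 0 + 1 :=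
    hK.eventually_forall_of_forall_eventually fun y hy =>
      hg.norm.continuousAt.eventually_lt_const <|
        (hC y hy).trans_lt <| (le_max_left C 0).trans_lt (lt_add_one _)
  refine ⟨max C 0 + 1, bound_on_K.mono fun s hs y => ?_⟩
  by_cases hy : y ∈ K
  · exact (hs y hy).le
  · rw [hgK s y hy, norm_zero]
    positivity

variable {X Y F : Type*} [MeasurableSpace X] [TopologicalSpace Y] [MeasurableSpace Y]
  [OpensMeasurableSpace Y] [NormedAddCommGroup F] {μ : Measure X} {f : X → Y} {ψ : Y → F}

theorem integral_map_of_hasCompactSupport [NormedSpace ℝ F] (hf : AEMeasurable f μ)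
    (hψ : Continuous ψ) (hψ_supp : HasCompactSupport ψ) :
    ∫ y, ψ y ∂μ.map f = ∫ x, ψ (f x) ∂μ :=
  integral_map hf (hψ.stronglyMeasurable_of_hasCompactSupport hψ_supp).aestronglyMeasurable

theorem integrable_comp_of_hasCompactSupport [IsFiniteMeasure μ] (hf : AEMeasurable f μ)
    (hψ : Continuous ψ) (hψ_supp : HasCompactSupport ψ) :
    Integrable (fun x => ψ (f x)) μ :=
  (hψ.integrable_of_hasCompactSupport hψ_supp).comp_aemeasurable hf

end CompactSupport

section Transport

variable {X E F : Type*} [MeasurableSpace X]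
  [NormedAddCommGroup E] [NormedSpace ℝ E] [NormedAddCommGroup F] [NormedSpace ℝ F]
  {v : ℝ → E → E} {z : X → ℝ → E} {φ : E → F} {μ : Measure X}

theorem fderiv_apply_eq_zero_of_notMem_tsupport {y : E} (hy : y ∉ tsupport φ) (w : E) :
    fderiv ℝ φ y w = 0 := by
  rw [fderiv_of_notMem_tsupport ℝ hy, zero_apply]

theorem hasCompactSupport_fderiv_apply (hφ_supp : HasCompactSupport φ) (w : E → E) :
    HasCompactSupport fun y => fderiv ℝ φ y (w y) :=
  hφ_supp.mono' fun y => not_imp_comm.1 fun hy => fderiv_apply_eq_zero_of_notMem_tsupport hy (w y)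

theorem continuous_uncurry_fderiv_apply {T : Type*} [TopologicalSpace T] {w : T → E → E}
    (hφ : ContDiff ℝ 1 φ) (hw : Continuous (uncurry w)) :
    Continuous (uncurry fun t y => fderiv ℝ φ y (w t y)) :=
  ((hφ.continuous_fderiv one_ne_zero).comp continuous_snd).clm_apply hw

theorem hasDerivAt_comp_isIntegralCurve {γ : ℝ → E} (hφ : Differentiable ℝ φ)
    (hγ : IsIntegralCurve γ v) (t : ℝ) :
    HasDerivAt (fun s => φ (γ s)) (fderiv ℝ φ (γ t) (v t (γ t))) t :=
  (hφ (γ t)).hasFDerivAt.comp_hasDerivAt t (hγ t)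

variable [MeasurableSpace E] [OpensMeasurableSpace E] [IsFiniteMeasure μ]

theorem hasDerivAt_integral_comp_isIntegralCurve (hv : Continuous (uncurry v))
    (hz_meas : ∀ t, AEMeasurable (fun x => z x t) μ) (hz : ∀ᵐ x ∂μ, IsIntegralCurve (z x) v)
    (hφ_supp : HasCompactSupport φ) (hφ : ContDiff ℝ 1 φ) (t : ℝ) :
    HasDerivAt (fun s => ∫ x, φ (z x s) ∂μ) (∫ x, fderiv ℝ φ (z x t) (v t (z x t)) ∂μ) t := by
  have hφ'v : Continuous (uncurry fun s y => fderiv ℝ φ y (v s y)) :=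
    continuous_uncurry_fderiv_apply hφ hv
  have hφz_int : ∀ s, Integrable (fun x => φ (z x s)) μ := fun s =>
    integrable_comp_of_hasCompactSupport (hz_meas s) hφ.continuous hφ_supp
  have hφ'z_int : Integrable (fun x => fderiv ℝ φ (z x t) (v t (z x t))) μ :=
    integrable_comp_of_hasCompactSupport (hz_meas t) (hφ'v.uncurry_left t)
      (hasCompactSupport_fderiv_apply hφ_supp (v t))
  obtain ⟨C, hC⟩ : ∃ C, ∀ᶠ s in 𝓝 t, ∀ y, ‖fderiv ℝ φ y (v s y)‖ ≤ C :=
    exists_eventually_forall_norm_le_of_eq_zero_off_isCompact hφ'v hφ_supp.isCompact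
      (fun s y hy => fderiv_apply_eq_zero_of_notMem_tsupport hy (v s y)) t
  exact (hasDerivAt_integral_of_dominated_loc_of_deriv_le
    (F' := fun s x => fderiv ℝ φ (z x s) (v s (z x s))) hC
    (.of_forall fun s => (hφz_int s).aestronglyMeasurable) (hφz_int t)
    hφ'z_int.aestronglyMeasurable
    (.of_forall fun x s hs => hs (z x s)) (integrable_const C)
    (hz.mono fun x hx s _ =>
      hasDerivAt_comp_isIntegralCurve (hφ.differentiable one_ne_zero) hx s)).2

/- The points of `X` only label the characteristics, as in the superposition principle; a flow is
the case `X = E`, `z x 0 = x`. -/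
theorem pushforward_solves_continuity_equation_weakly_general (hv : Continuous (uncurry v))
    (hz_meas : ∀ t, AEMeasurable (fun x => z x t) μ) (hz : ∀ᵐ x ∂μ, IsIntegralCurve (z x) v)
    (hφ_supp : HasCompactSupport φ) (hφ : ContDiff ℝ 1 φ) (t : ℝ) :
    HasDerivAt (fun s => ∫ y, φ y ∂μ.map fun x => z x s)
      (∫ y, fderiv ℝ φ y (v t y) ∂μ.map fun x => z x t) t := by
  have hφ'v : Continuous fun y => fderiv ℝ φ y (v t y) :=
    (continuous_uncurry_fderiv_apply hφ hv).uncurry_left t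
  have change_of_variables : (fun s => ∫ y, φ y ∂μ.map fun x => z x s) =
      fun s => ∫ x, φ (z x s) ∂μ :=
    funext fun s => integral_map_of_hasCompactSupport (hz_meas s) hφ.continuous hφ_supp
  rw [change_of_variables, integral_map_of_hasCompactSupport (hz_meas t) hφ'v
    (hasCompactSupport_fderiv_apply hφ_supp (v t))]
  exact hasDerivAt_integral_comp_isIntegralCurve hv hz_meas hz hφ_supp hφ t

end Transport

/- STATEMENT 10: The pushforward along the flow solves the continuity equation weakly.
With `∂ₜ z(x,t) = v(z(x,t),t)`, `z(x,0) = x`, `μ_t = (z(·,t))_# μ₀`, for every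
compactly supported C¹ test function `φ`,
`(d/dt) ∫ φ dμ_t = ∫ ⟨∇φ(y), v(y,t)⟩ dμ_t(y)` (the pairing `⟨∇φ(y), w⟩` being the
differential `fderiv ℝ φ y w`). -/
theorem pushforward_solves_continuity_equation_weakly {d : ℕ}
    (v : (Fin d → ℝ) → ℝ → Fin d → ℝ)
    (hv : Continuous fun q : (Fin d → ℝ) × ℝ => v q.1 q.2)
    (z : (Fin d → ℝ) → ℝ → Fin d → ℝ)
    (hz_cont : Continuous fun q : (Fin d → ℝ) × ℝ => z q.1 q.2)
    (hzode : ∀ (x : Fin d → ℝ) (t : ℝ), HasDerivAt (fun s => z x s) (v (z x t) t) t)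
    (hz0 : ∀ x, z x 0 = x)
    (μ₀ : Measure (Fin d → ℝ)) [IsFiniteMeasure μ₀]
    (φ : (Fin d → ℝ) → ℝ) (hφ_supp : HasCompactSupport φ) (hφ : ContDiff ℝ 1 φ) :
    ∀ t ∈ Set.Icc (0:ℝ) 1,
      HasDerivAt (fun s => ∫ y, φ y ∂(Measure.map (fun x => z x s) μ₀))
        (∫ y, fderiv ℝ φ y (v y t) ∂(Measure.map (fun x => z x t) μ₀)) t :=
  fun t _ => pushforward_solves_continuity_equation_weakly_general (v := fun s y => v y s)
    (hv.comp continuous_swap) (fun s => (hz_cont.uncurry_right s).aemeasurable)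
    (.of_forall hzode) hφ_supp hφ t
end
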